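/- Let ρ*(π, m, δ) denote the unique ρ ∈ (0,1) satisfying π·δ·g(ρ/(2πmδ)) + (1−π)·δ·g(ρ/(2(1−π)mδ)) = 1 − ρ². Then the map (π, m, δ) ↦ Φ(−ρ*(π,m,δ)·m) is strictly decreasing in π on (0,1/2) (for fixed m, δ), strictly decreasing in m on (0,∞) (for fixed π ∈ (0,1/2), δ), and strictly decreasing in δ on (0,∞) (for fixed π ∈ (0,1/2), m). -/

import Mathlib

open MeasureTheory

/-- The standard normal density. -/
noncomputable def normPDF (x : ℝ) : ℝ := Real.exp (-x ^ 2 / 2) / Real.sqrt (2 * Real.pi)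

/-- The standard normal cumulative distribution function. -/
noncomputable def normCDF (x : ℝ) : ℝ := ∫ t in Set.Iic x, normPDF t

/-- `g₁(x) = x·Φ(x) + φ(x)`, equal to `E[(Z+x)₊]` for standard normal `Z`. -/
noncomputable def g1 (x : ℝ) : ℝ := x * normCDF x + normPDF x

/-- `g₂(x) = (x²+1)·Φ(x) + x·φ(x)`, equal to `E[(Z+x)₊²]` for standard normal `Z`. -/
noncomputable def g2 (x : ℝ) : ℝ := (x ^ 2 + 1) * normCDF x + x * normPDF x

/-- The inverse of `g₁` (on its range `(0,∞)`). -/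
noncomputable def g1inv : ℝ → ℝ := Function.invFun g1

/-- `g = g₂ ∘ g₁⁻¹`. -/
noncomputable def gfn (t : ℝ) : ℝ := g2 (g1inv t)

/-!
Put `t = ρ m`. The equation for `ρ*` becomes `F(π, m, δ, t) = 1`, where `F` is the sum of
`(t / m)²` and the perspective terms `s · g(c / s)`, `s = πδ, (1 - π)δ`, at `c = t / (2m²)`.
Since `F` increases in `t` and decreases in each parameter (in `π` up to `1 / 2`), its level set is
the graph of a function increasing in each parameter, and the test error is `Φ(-t)`.

The monotonicity of `F` in `δ` and `π` rests on `g(t) / t` being strictly increasing and on `g`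
being strictly convex. Both follow from monotone ratios: `g₂' = 2 · g₁`, `g₁' = Φ`, `Φ' = φ`, all of
these vanish at `-∞`, and a ratio of functions vanishing at `-∞` is increasing as soon as the ratio
of their derivatives is. Starting from `Φ / φ`, whose derivative is `g₁ / φ > 0`, this makes
`g₁ / Φ` and then `g₂ / g₁` increasing.
-/

open Set Filter Topology

section Monotonicity

theorem lt_of_strictMonoOn_Iic_of_tendsto_atBot {α β : Type*} [LinearOrder α] [NoMinOrder α]
    [TopologicalSpace β] [Preorder β] [OrderClosedTopology β] {f : α → β} {x : α} {b : β}
    (hf : StrictMonoOn f (Iic x)) (hlim : Tendsto f atBot (𝓝 b)) : b < f x := by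
  obtain ⟨y, hy⟩ := exists_lt x
  have : Nonempty α := ⟨x⟩
  have hle : b ≤ f y := by
    refine le_of_tendsto hlim ?_
    filter_upwards [eventually_le_atBot y] with z hz
    exact hf.monotoneOn (hz.trans hy.le) hy.le hz
  exact hle.trans_lt (hf hy.le self_mem_Iic hy)

theorem strictMonoOn_of_implicit {α β γ : Type*} [Preorder α] [LinearOrder β] [Preorder γ]
    {F : α → β → γ} {u : α → β} {c : γ} {S : Set α} {T : Set β} (hu : MapsTo u S T)
    (hF : ∀ x ∈ S, F x (u x) = c) (hmono : ∀ x ∈ S, StrictMonoOn (F x) T)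
    (hanti : ∀ t ∈ T, StrictAntiOn (fun x => F x t) S) : StrictMonoOn u S := by
  intro x hx y hy hxy
  refine ((hmono y hy).lt_iff_lt (hu hx) (hu hy)).mp ?_
  calc F y (u x) < F x (u x) := hanti (u x) (hu hx) hx hy hxy
    _ = F y (u y) := by rw [hF x hx, hF y hy]

variable {f g f' g' : ℝ → ℝ}

theorem lt_of_hasDerivAt_pos_of_tendsto_atBot {x b : ℝ} (hf : ∀ y, HasDerivAt f (f' y) y)
    (hf' : ∀ y < x, 0 < f' y) (hlim : Tendsto f atBot (𝓝 b)) : b < f x := by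
  refine lt_of_strictMonoOn_Iic_of_tendsto_atBot ?_ hlim
  refine strictMonoOn_of_hasDerivWithinAt_pos (convex_Iic x)
    (fun y _ => (hf y).continuousAt.continuousWithinAt)
    (fun y _ => (hf y).hasDerivWithinAt) fun y hy => hf' y ?_
  rwa [interior_Iic] at hy

/-- The monotone form of l'Hôpital's rule: integrating `f' < (f' / g') x · g'` over `(-∞, x)` gives
`f / g < f' / g'`, which says that `f / g` has positive derivative. -/
theorem strictMono_div_of_strictMono_deriv_div (hf : ∀ x, HasDerivAt f (f' x) x)
    (hg : ∀ x, HasDerivAt g (g' x) x) (hg' : ∀ x, 0 < g' x) (hf0 : Tendsto f atBot (𝓝 0))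
    (hg0 : Tendsto g atBot (𝓝 0)) (hmono : StrictMono fun x => f' x / g' x) :
    StrictMono fun x => f x / g x := by
  have hgpos (x : ℝ) : 0 < g x :=
    lt_of_hasDerivAt_pos_of_tendsto_atBot hg (fun y _ => hg' y) hg0
  have hlt (x : ℝ) : f x < f' x / g' x * g x := by
    set k := f' x / g' x
    have hderiv (y : ℝ) : HasDerivAt (fun y => k * g y - f y) (k * g' y - f' y) y :=
      ((hg y).const_mul k).sub (hf y)
    have hderiv_pos (y : ℝ) (hy : y < x) : 0 < k * g' y - f' y :=
      sub_pos.mpr ((div_lt_iff₀ (hg' y)).mp (hmono hy))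
    have hlim : Tendsto (fun y => k * g y - f y) atBot (𝓝 0) := by
      simpa using (hg0.const_mul k).sub hf0
    have hpos := lt_of_hasDerivAt_pos_of_tendsto_atBot hderiv hderiv_pos hlim
    exact sub_pos.mp hpos
  refine strictMono_of_hasDerivAt_pos (fun x => (hf x).div (hg x) (hgpos x).ne') fun x => ?_
  have hnum : f x * g' x < f' x * g x := by
    calc f x * g' x < f' x / g' x * g x * g' x := mul_lt_mul_of_pos_right (hlt x) (hg' x)
      _ = f' x * g x := by field_simp [(hg' x).ne']
  exact div_pos (sub_pos.mpr hnum) (pow_pos (hgpos x) 2)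

/-- By Cauchy's mean value theorem the slopes of `f ∘ r` are values of `f' / g'`. -/
theorem strictConvexOn_comp_of_strictMono_deriv_div {r : ℝ → ℝ} {s : Set ℝ} (hs : Convex ℝ s)
    (hr : RightInvOn r g s) (hf : ∀ x, HasDerivAt f (f' x) x) (hg : ∀ x, HasDerivAt g (g' x) x)
    (hg' : ∀ x, 0 < g' x) (hmono : StrictMono fun x => f' x / g' x) :
    StrictConvexOn ℝ s (f ∘ r) := by
  have hgmono := strictMono_of_hasDerivAt_pos hg hg'
  have hslope {a b : ℝ} (ha : a ∈ s) (hb : b ∈ s) (hab : a < b) :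
      ∃ ξ ∈ Ioo (r a) (r b), ((f ∘ r) b - (f ∘ r) a) / (b - a) = f' ξ / g' ξ := by
    have hlt : r a < r b := hgmono.lt_iff_lt.mp (by rwa [hr ha, hr hb])
    obtain ⟨ξ, hξ, hcauchy⟩ := exists_ratio_hasDerivAt_eq_ratio_slope f f' hlt
      (fun x _ => (hf x).continuousAt.continuousWithinAt) (fun x _ => hf x) g g'
      (fun x _ => (hg x).continuousAt.continuousWithinAt) (fun x _ => hg x)
    rw [hr ha, hr hb] at hcauchy
    refine ⟨ξ, hξ, ?_⟩
    rw [div_eq_div_iff (sub_pos.mpr hab).ne' (hg' ξ).ne', Function.comp_apply,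
      Function.comp_apply, ← hcauchy, mul_comm]
  refine strictConvexOn_of_slope_strict_mono_adjacent hs fun {x y z} hx hz hxy hyz => ?_
  have hy : y ∈ s := hs.ordConnected.out hx hz ⟨hxy.le, hyz.le⟩
  obtain ⟨ξ, hξ, hξslope⟩ := hslope hx hy hxy
  obtain ⟨η, hη, hηslope⟩ := hslope hy hz hyz
  rw [hξslope, hηslope]
  exact hmono (hξ.2.trans hη.1)

end Monotonicity

section Convexity

variable {𝕜 : Type*} [Field 𝕜]

/-- The perspective `(c, s) ↦ s · f(c / s)` of a function `f`, meant for `s > 0`. -/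
def perspective (f : 𝕜 → 𝕜) (c s : 𝕜) : 𝕜 := s * f (c / s)

variable [LinearOrder 𝕜] [IsStrictOrderedRing 𝕜] {f : 𝕜 → 𝕜}

theorem perspective_strictMonoOn_left (hf : StrictMonoOn f (Ioi 0)) {s : 𝕜} (hs : 0 < s) :
    StrictMonoOn (fun c => perspective f c s) (Ioi 0) := fun _ ha _ hb hab =>
  mul_lt_mul_of_pos_left
    (hf (div_pos ha hs) (div_pos hb hs) (div_lt_div_of_pos_right hab hs)) hs

theorem perspective_strictAntiOn_right (hf : StrictMonoOn (fun t => f t / t) (Ioi 0)) {c : 𝕜}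
    (hc : 0 < c) : StrictAntiOn (perspective f c) (Ioi 0) := by
  have hratio {s : 𝕜} (hs : 0 < s) : perspective f c s = c * (f (c / s) / (c / s)) := by
    unfold perspective
    field_simp
  intro a (ha : 0 < a) b (hb : 0 < b) hab
  rw [hratio ha, hratio hb]
  exact mul_lt_mul_of_pos_left
    (hf (div_pos hc hb) (div_pos hc ha) (div_lt_div_of_pos_left hc ha hab)) hc

theorem strictConvexOn_perspective (hf : StrictConvexOn 𝕜 (Ioi 0) f) {c : 𝕜} (hc : 0 < c) :
    StrictConvexOn 𝕜 (Ioi 0) (perspective f c) := by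
  refine ⟨convex_Ioi 0, fun x (hx : 0 < x) y (hy : 0 < y) hxy a b ha hb hab => ?_⟩
  simp only [smul_eq_mul, perspective]
  set s := a * x + b * y
  have hs : 0 < s := by positivity
  have hweights : a * x / s + b * y / s = 1 := by rw [← add_div, div_self hs.ne']
  have hpoint : a * x / s * (c / x) + b * y / s * (c / y) = c / s := by
    field_simp
    exact hab
  have hne : c / x ≠ c / y := by
    simpa only [ne_eq, div_eq_mul_inv, mul_right_inj' hc.ne', inv_inj] using hxy
  have hconv := hf.2 (div_pos hc hx) (div_pos hc hy) hne (div_pos (mul_pos ha hx) hs)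
    (div_pos (mul_pos hb hy) hs) hweights
  simp only [smul_eq_mul, hpoint] at hconv
  calc s * f (c / s) < s * (a * x / s * f (c / x) + b * y / s * f (c / y)) :=
        mul_lt_mul_of_pos_left hconv hs
    _ = a * (x * f (c / x)) + b * (y * f (c / y)) := by field_simp

theorem add_lt_add_of_strictConvexOn {s : Set 𝕜} {a b c d : 𝕜} (hf : StrictConvexOn 𝕜 s f)
    (ha : a ∈ s) (hd : d ∈ s) (hab : a < b) (hac : a < c) (hsum : b + c = a + d) :
    f b + f c < f a + f d := by
  have had : 0 < d - a := by linarith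
  set θ := (b - a) / (d - a)
  have hθ : θ * (d - a) = b - a := div_mul_cancel₀ _ had.ne'
  have hθ0 : 0 < θ := div_pos (sub_pos.mpr hab) had
  have hθ1 : 0 < 1 - θ := sub_pos.mpr ((div_lt_one had).mpr (by linarith))
  have hb := hf.2 ha hd (sub_pos.mp had).ne hθ1 hθ0 (sub_add_cancel 1 θ)
  have hc := hf.2 ha hd (sub_pos.mp had).ne hθ0 hθ1 (add_sub_cancel θ 1)
  simp only [smul_eq_mul] at hb hc
  rw [show (1 - θ) * a + θ * d = b by linear_combination hθ] at hb
  rw [show θ * a + (1 - θ) * d = c by linear_combination -hθ - hsum] at hc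
  linear_combination hb + hc

end Convexity

section Gaussian

theorem normPDF_pos (x : ℝ) : 0 < normPDF x := by
  unfold normPDF
  positivity

theorem continuous_normPDF : Continuous normPDF := by
  unfold normPDF
  fun_prop

theorem normPDF_eq_gaussianPDFReal : normPDF = ProbabilityTheory.gaussianPDFReal 0 1 := by
  ext x
  simp [normPDF, ProbabilityTheory.gaussianPDFReal, div_eq_inv_mul]

theorem integrable_normPDF : Integrable normPDF :=
  normPDF_eq_gaussianPDFReal ▸ ProbabilityTheory.integrable_gaussianPDFReal 0 1

theorem hasDerivAt_normPDF (x : ℝ) : HasDerivAt normPDF (-x * normPDF x) x := by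
  have hexponent : HasDerivAt (fun x : ℝ => -x ^ 2 / 2) (-x) x :=
    ((hasDerivAt_pow 2 x).neg.div_const 2).congr_deriv (by ring)
  refine (hexponent.exp.div_const (Real.sqrt (2 * Real.pi))).congr_deriv ?_
  unfold normPDF
  ring

theorem tendsto_pow_mul_normPDF_atBot (n : ℕ) :
    Tendsto (fun x => x ^ n * normPDF x) atBot (𝓝 0) := by
  have habs := ((tendsto_rpow_abs_mul_exp_neg_mul_sq_cocompact (a := 1 / 2) (by norm_num)
    n).mono_left atBot_le_cocompact).div_const (Real.sqrt (2 * Real.pi))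
  rw [zero_div] at habs
  refine squeeze_zero_norm (fun x => ?_) habs
  rw [norm_mul, norm_pow, Real.norm_eq_abs, Real.norm_of_nonneg (normPDF_pos x).le,
    Real.rpow_natCast, normPDF, mul_div_assoc, show -x ^ 2 / 2 = -(1 / 2) * x ^ 2 by ring]

theorem hasDerivAt_normCDF (x : ℝ) : HasDerivAt normCDF (normPDF x) x := by
  have hsplit (y : ℝ) : normCDF y = normCDF 0 + ∫ t in (0 : ℝ)..y, normPDF t := by
    rw [← intervalIntegral.integral_Iic_sub_Iic integrable_normPDF.integrableOn
      integrable_normPDF.integrableOn]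
    exact (add_sub_cancel _ _).symm
  rw [funext hsplit]
  exact (continuous_normPDF.integral_hasStrictDerivAt 0 x).hasDerivAt.const_add _

theorem normCDF_strictMono : StrictMono normCDF :=
  strictMono_of_hasDerivAt_pos hasDerivAt_normCDF normPDF_pos

theorem tendsto_normCDF_atBot : Tendsto normCDF atBot (𝓝 0) :=
  tendsto_integral_Iic_zero tendsto_id

theorem normCDF_pos (x : ℝ) : 0 < normCDF x :=
  lt_of_hasDerivAt_pos_of_tendsto_atBot hasDerivAt_normCDF (fun y _ => normPDF_pos y)
    tendsto_normCDF_atBot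

theorem normCDF_lt_normPDF {x : ℝ} (hx : x ≤ -1) : normCDF x < normPDF x := by
  have hderiv (y : ℝ) : HasDerivAt (fun y => normPDF y - normCDF y)
      (-y * normPDF y - normPDF y) y := (hasDerivAt_normPDF y).sub (hasDerivAt_normCDF y)
  have hderiv_pos (y : ℝ) (hy : y < x) : 0 < -y * normPDF y - normPDF y := by
    calc 0 < (-y - 1) * normPDF y := mul_pos (by linarith) (normPDF_pos y)
      _ = -y * normPDF y - normPDF y := by ring
  have hlim : Tendsto (fun y => normPDF y - normCDF y) atBot (𝓝 0) := by
    simpa using (tendsto_pow_mul_normPDF_atBot 0).sub tendsto_normCDF_atBot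
  have hpos := lt_of_hasDerivAt_pos_of_tendsto_atBot hderiv hderiv_pos hlim
  exact sub_pos.mp hpos

theorem tendsto_pow_mul_normCDF_atBot (n : ℕ) :
    Tendsto (fun x => x ^ n * normCDF x) atBot (𝓝 0) := by
  refine squeeze_zero_norm' ?_ (by simpa using (tendsto_pow_mul_normPDF_atBot n).norm)
  filter_upwards [eventually_le_atBot (-1)] with x hx
  rw [norm_mul, norm_pow, Real.norm_of_nonneg (normCDF_pos x).le, Real.norm_eq_abs,
    abs_of_pos (normPDF_pos x)]
  exact mul_le_mul_of_nonneg_left (normCDF_lt_normPDF hx).le (by positivity)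

end Gaussian

section TruncatedMoments

theorem hasDerivAt_g1 (x : ℝ) : HasDerivAt g1 (normCDF x) x :=
  (((hasDerivAt_id' x).mul (hasDerivAt_normCDF x)).add (hasDerivAt_normPDF x)).congr_deriv (by ring)

theorem hasDerivAt_g2 (x : ℝ) : HasDerivAt g2 (2 * g1 x) x := by
  refine ((((hasDerivAt_pow 2 x).add_const 1).mul (hasDerivAt_normCDF x)).add
    ((hasDerivAt_id' x).mul (hasDerivAt_normPDF x))).congr_deriv ?_
  simp only [g1, Nat.cast_ofNat]
  ring

theorem tendsto_g1_atBot : Tendsto g1 atBot (𝓝 0) := by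
  unfold g1
  simpa only [pow_one, pow_zero, one_mul, add_zero] using
    (tendsto_pow_mul_normCDF_atBot 1).add (tendsto_pow_mul_normPDF_atBot 0)

theorem tendsto_g2_atBot : Tendsto g2 atBot (𝓝 0) := by
  unfold g2
  simpa only [pow_one, pow_zero, ← add_mul, add_zero] using
    ((tendsto_pow_mul_normCDF_atBot 2).add (tendsto_pow_mul_normCDF_atBot 0)).add
      (tendsto_pow_mul_normPDF_atBot 1)

theorem g1_strictMono : StrictMono g1 :=
  strictMono_of_hasDerivAt_pos hasDerivAt_g1 normCDF_pos

theorem g1_pos (x : ℝ) : 0 < g1 x :=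
  lt_of_hasDerivAt_pos_of_tendsto_atBot hasDerivAt_g1 (fun y _ => normCDF_pos y) tendsto_g1_atBot

theorem g2_strictMono : StrictMono g2 :=
  strictMono_of_hasDerivAt_pos hasDerivAt_g2 fun x => mul_pos two_pos (g1_pos x)

theorem normCDF_div_normPDF_strictMono : StrictMono fun x => normCDF x / normPDF x := by
  have hderiv (x : ℝ) : HasDerivAt (fun x => normCDF x / normPDF x) (g1 x / normPDF x) x := by
    refine ((hasDerivAt_normCDF x).div (hasDerivAt_normPDF x) (normPDF_pos x).ne').congr_deriv ?_
    have := (normPDF_pos x).ne'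
    unfold g1
    field_simp
    ring
  exact strictMono_of_hasDerivAt_pos hderiv fun x => div_pos (g1_pos x) (normPDF_pos x)

theorem g1_div_normCDF_strictMono : StrictMono fun x => g1 x / normCDF x :=
  strictMono_div_of_strictMono_deriv_div hasDerivAt_g1 hasDerivAt_normCDF normPDF_pos
    tendsto_g1_atBot tendsto_normCDF_atBot normCDF_div_normPDF_strictMono

theorem deriv_g2_div_deriv_g1_strictMono : StrictMono fun x => 2 * g1 x / normCDF x := by
  simpa only [mul_div_assoc] using g1_div_normCDF_strictMono.const_mul two_pos

theorem g2_div_g1_strictMono : StrictMono fun x => g2 x / g1 x :=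
  strictMono_div_of_strictMono_deriv_div hasDerivAt_g2 hasDerivAt_g1 normCDF_pos
    tendsto_g2_atBot tendsto_g1_atBot deriv_g2_div_deriv_g1_strictMono

theorem exists_g1_eq {t : ℝ} (ht : 0 < t) : ∃ x, g1 x = t := by
  have hcont : Continuous g1 :=
    continuous_iff_continuousAt.mpr fun x => (hasDerivAt_g1 x).continuousAt
  obtain ⟨a, ha⟩ := (tendsto_g1_atBot.eventually_lt_const ht).exists
  have hb : t ≤ g1 (t / normCDF 0) := by
    have hnonneg : 0 ≤ t / normCDF 0 := (div_pos ht (normCDF_pos 0)).le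
    calc t = t / normCDF 0 * normCDF 0 := (div_mul_cancel₀ t (normCDF_pos 0).ne').symm
      _ ≤ t / normCDF 0 * normCDF (t / normCDF 0) :=
        mul_le_mul_of_nonneg_left (normCDF_strictMono.monotone hnonneg) hnonneg
      _ ≤ g1 (t / normCDF 0) := le_add_of_nonneg_right (normPDF_pos _).le
  exact mem_range_of_exists_le_of_exists_ge hcont ⟨a, ha.le⟩ ⟨_, hb⟩

theorem rightInvOn_g1inv : RightInvOn g1inv g1 (Ioi 0) := fun _ ht =>
  Function.invFun_eq (exists_g1_eq ht)

theorem g1inv_strictMonoOn : StrictMonoOn g1inv (Ioi 0) := fun a ha b hb hab => by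
  rwa [← g1_strictMono.lt_iff_lt, rightInvOn_g1inv ha, rightInvOn_g1inv hb]

theorem gfn_strictMonoOn : StrictMonoOn gfn (Ioi 0) :=
  g2_strictMono.comp_strictMonoOn g1inv_strictMonoOn

theorem gfn_div_strictMonoOn : StrictMonoOn (fun t => gfn t / t) (Ioi 0) := by
  refine (g2_div_g1_strictMono.comp_strictMonoOn g1inv_strictMonoOn).congr fun t ht => ?_
  simp only [Function.comp_apply, gfn, rightInvOn_g1inv ht]

theorem strictConvexOn_gfn : StrictConvexOn ℝ (Ioi 0) gfn :=
  strictConvexOn_comp_of_strictMono_deriv_div (convex_Ioi 0) rightInvOn_g1inv hasDerivAt_g2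
    hasDerivAt_g1 normCDF_pos deriv_g2_div_deriv_g1_strictMono

end TruncatedMoments

section FixedPoint

/-- The function `F(π, m, δ, t)`, with `p` for `π`, whose level set `F = 1` determines the effective
signal `t = ρ m`: the left side of the equation for `ρ*`, plus `ρ²`, rewritten in terms of `t`. -/
noncomputable def snrFun (p m δ t : ℝ) : ℝ :=
  perspective gfn (t / (2 * m ^ 2)) (p * δ) + perspective gfn (t / (2 * m ^ 2)) ((1 - p) * δ) +
    (t / m) ^ 2

variable {p m δ t : ℝ}

theorem snrFun_strictMonoOn (hp : p ∈ Ioo (0 : ℝ) 1) (hm : 0 < m) (hδ : 0 < δ) :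
    StrictMonoOn (snrFun p m δ) (Ioi 0) := by
  intro t (ht : 0 < t) u (hu : 0 < u) htu
  have hscale : t / (2 * m ^ 2) < u / (2 * m ^ 2) := by gcongr
  have hpersp {s : ℝ} (hs : 0 < s) :
      perspective gfn (t / (2 * m ^ 2)) s < perspective gfn (u / (2 * m ^ 2)) s :=
    perspective_strictMonoOn_left gfn_strictMonoOn hs (mem_Ioi.mpr (by positivity))
      (mem_Ioi.mpr (by positivity)) hscale
  unfold snrFun
  gcongr ?_ + ?_ + (?_ / m) ^ 2
  · exact hpersp (mul_pos hp.1 hδ)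
  · exact hpersp (mul_pos (sub_pos.mpr hp.2) hδ)

theorem snrFun_strictAntiOn_signalStrength (hp : p ∈ Ioo (0 : ℝ) 1) (hδ : 0 < δ) (ht : 0 < t) :
    StrictAntiOn (fun m => snrFun p m δ t) (Ioi 0) := by
  intro m (hm : 0 < m) n (hn : 0 < n) hmn
  have hscale : t / (2 * n ^ 2) < t / (2 * m ^ 2) := by gcongr
  have hpersp {s : ℝ} (hs : 0 < s) :
      perspective gfn (t / (2 * n ^ 2)) s < perspective gfn (t / (2 * m ^ 2)) s :=
    perspective_strictMonoOn_left gfn_strictMonoOn hs (mem_Ioi.mpr (by positivity))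
      (mem_Ioi.mpr (by positivity)) hscale
  have hsq : (t / n) ^ 2 < (t / m) ^ 2 := by gcongr
  exact add_lt_add (add_lt_add (hpersp (mul_pos hp.1 hδ))
    (hpersp (mul_pos (sub_pos.mpr hp.2) hδ))) hsq

theorem snrFun_strictAntiOn_aspectRatio (hp : p ∈ Ioo (0 : ℝ) 1) (hm : 0 < m) (ht : 0 < t) :
    StrictAntiOn (fun δ => snrFun p m δ t) (Ioi 0) := by
  have hpersp {q : ℝ} (hq : 0 < q) :
      StrictAntiOn (fun δ => perspective gfn (t / (2 * m ^ 2)) (q * δ)) (Ioi 0) :=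
    fun δ hδ ε hε h =>
      perspective_strictAntiOn_right gfn_div_strictMonoOn (by positivity) (mul_pos hq hδ)
        (mul_pos hq hε) (mul_lt_mul_of_pos_left h hq)
  exact ((hpersp hp.1).add (hpersp (sub_pos.mpr hp.2))).add_const _

/-- Raising `π` to at most `1 / 2` moves the weights `πδ` and `(1 - π)δ` towards each other with
their sum kept fixed, so strict convexity of the perspective applies. -/
theorem snrFun_strictAntiOn_minorityProb (hm : 0 < m) (hδ : 0 < δ) (ht : 0 < t) :
    StrictAntiOn (fun p => snrFun p m δ t) (Ioc 0 (1 / 2)) := by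
  intro p ⟨hp, _⟩ q ⟨_, hq⟩ hpq
  have hpδ : 0 < p * δ := mul_pos hp hδ
  have hpδ' : 0 < (1 - p) * δ := mul_pos (by linarith) hδ
  have hconv := strictConvexOn_perspective strictConvexOn_gfn (c := t / (2 * m ^ 2)) (by positivity)
  exact add_lt_add_left (add_lt_add_of_strictConvexOn hconv hpδ hpδ'
    (mul_lt_mul_of_pos_right hpq hδ) (mul_lt_mul_of_pos_right (by linarith) hδ) (by ring)) _

theorem snrFun_mul_eq_one {ρ : ℝ} (hm : m ≠ 0)
    (hρ : p * δ * gfn (ρ / (2 * p * m * δ)) + (1 - p) * δ * gfn (ρ / (2 * (1 - p) * m * δ)) =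
      1 - ρ ^ 2) : snrFun p m δ (ρ * m) = 1 := by
  have harg (q : ℝ) : ρ * m / (2 * m ^ 2) / (q * δ) = ρ / (2 * q * m * δ) := by
    rw [sq, ← mul_assoc, mul_div_mul_right _ _ hm, div_div]
    ring_nf
  simp only [snrFun, perspective, harg, mul_div_cancel_right₀ ρ hm]
  linarith

end FixedPoint

theorem stmt_19_general (ρstar : ℝ → ℝ → ℝ → ℝ)
    (hρstar : ∀ p m δ : ℝ, p ∈ Ioo (0 : ℝ) 1 → 0 < m → 0 < δ →
      0 < ρstar p m δ ∧
      p * δ * gfn (ρstar p m δ / (2 * p * m * δ)) +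
          (1 - p) * δ * gfn (ρstar p m δ / (2 * (1 - p) * m * δ)) =
        1 - (ρstar p m δ) ^ 2) :
    (∀ m δ : ℝ, 0 < m → 0 < δ →
      StrictAntiOn (fun p => normCDF (-(ρstar p m δ * m))) (Ioc 0 (1 / 2))) ∧
    (∀ p δ : ℝ, p ∈ Ioo (0 : ℝ) 1 → 0 < δ →
      StrictAntiOn (fun m => normCDF (-(ρstar p m δ * m))) (Ioi 0)) ∧
    (∀ p m : ℝ, p ∈ Ioo (0 : ℝ) 1 → 0 < m →
      StrictAntiOn (fun δ => normCDF (-(ρstar p m δ * m))) (Ioi 0)) := by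
  have hpos {p m δ : ℝ} (hp : p ∈ Ioo (0 : ℝ) 1) (hm : 0 < m) (hδ : 0 < δ) :
      0 < ρstar p m δ * m := mul_pos (hρstar p m δ hp hm hδ).1 hm
  have hlevel {p m δ : ℝ} (hp : p ∈ Ioo (0 : ℝ) 1) (hm : 0 < m) (hδ : 0 < δ) :
      snrFun p m δ (ρstar p m δ * m) = 1 :=
    snrFun_mul_eq_one hm.ne' (hρstar p m δ hp hm hδ).2
  refine ⟨fun m δ hm hδ => ?_, fun p δ hp hδ => ?_, fun p m hp hm => ?_⟩ <;>
    refine normCDF_strictMono.comp_strictAntiOn (StrictMonoOn.neg ?_)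
  · have hsub {p : ℝ} (hp : p ∈ Ioc (0 : ℝ) (1 / 2)) : p ∈ Ioo (0 : ℝ) 1 :=
      ⟨hp.1, hp.2.trans_lt (by norm_num)⟩
    exact strictMonoOn_of_implicit (fun p hp => hpos (hsub hp) hm hδ)
      (fun p hp => hlevel (hsub hp) hm hδ)
      (fun p hp => snrFun_strictMonoOn (hsub hp) hm hδ)
      fun t ht => snrFun_strictAntiOn_minorityProb hm hδ ht
  · exact strictMonoOn_of_implicit (fun m hm => hpos hp hm hδ) (fun m hm => hlevel hp hm hδ)
      (fun m hm => snrFun_strictMonoOn hp hm hδ)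
      fun t ht => snrFun_strictAntiOn_signalStrength hp hδ ht
  · exact strictMonoOn_of_implicit (fun δ hδ => hpos hp hm hδ) (fun δ hδ => hlevel hp hm hδ)
      (fun δ hδ => snrFun_strictMonoOn hp hm hδ)
      fun t ht => snrFun_strictAntiOn_aspectRatio hp hm ht

/-- Under optimal margin rebalancing, the common asymptotic
test error `Φ(−ρ*(π,m,δ)·m)` is strictly decreasing in each of `π`
(on `(0,1/2)`), `m`, and `δ`. -/
theorem stmt_19 (ρstar : ℝ → ℝ → ℝ → ℝ)
    (hρstar : ∀ p m δ : ℝ, p ∈ Set.Ioo (0 : ℝ) 1 → 0 < m → 0 < δ →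
      ρstar p m δ ∈ Set.Ioo (0 : ℝ) 1 ∧
      p * δ * gfn (ρstar p m δ / (2 * p * m * δ)) +
          (1 - p) * δ * gfn (ρstar p m δ / (2 * (1 - p) * m * δ)) =
        1 - (ρstar p m δ) ^ 2)
    :
    (∀ m δ : ℝ, 0 < m → 0 < δ →
      StrictAntiOn (fun p => normCDF (-(ρstar p m δ * m))) (Set.Ioo 0 (1 / 2))) ∧
    (∀ p δ : ℝ, p ∈ Set.Ioo (0 : ℝ) (1 / 2) → 0 < δ →
      StrictAntiOn (fun m => normCDF (-(ρstar p m δ * m))) (Set.Ioi 0)) ∧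
    (∀ p m : ℝ, p ∈ Set.Ioo (0 : ℝ) (1 / 2) → 0 < m →
      StrictAntiOn (fun δ => normCDF (-(ρstar p m δ * m))) (Set.Ioi 0)) := by
  obtain ⟨hp, hm, hδ⟩ := stmt_19_general ρstar fun p m δ hp hm hδ =>
    (hρstar p m δ hp hm hδ).imp_left And.left
  have hsub : Ioo (0 : ℝ) (1 / 2) ⊆ Ioo 0 1 := Ioo_subset_Ioo_right (by norm_num)
  exact ⟨fun m δ hm hδ => (hp m δ hm hδ).mono Ioo_subset_Ioc_self,
    fun p δ hp => hm p δ (hsub hp), fun p m hp => hδ p m (hsub hp)⟩
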